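/- arXiv:2404.05948 — 2 statements merged into one kernel-verified Lean document; each statement's English description precedes it below -/
import Mathlib

section
/- Let p ≥ 6, u = 2^(−p), and let RN be a symmetric round-to-nearest function whose tie-breaking rule is ties-to-even or ties-to-away. Let x_h, x_l, y_h, y_l ∈ F_p with RN(x_h + x_l) = x_h, RN(y_h + y_l) = y_h, x_h·y_h < 0 and min(|x_h|, |y_h|) > max(|x_h|, |y_h|)/2 (i.e. r(x_h, y_h) > 1/2). Assume |x_h| and |y_h| are not two consecutive floating-point numbers, i.e. either |x_h| = |y_h| or there exists f ∈ F_p with min(|x_h|, |y_h|) < f < max(|x_h|, |y_h|). Then the output of sloppy double-word addition with rounding RN satisfies |z_h + z_l − S| ≤ u·|S|, where S = x_h + x_l + y_h + y_l. -/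
/-!
Since `x_h` and `y_h` have opposite signs and their absolute values lie within a factor two of each
other, Sterbenz' lemma (`Fp_sub_mem`) makes `s_h = x_h + y_h` exact, so `s_l = 0`, and the algorithm
reduces to `v = RN(t)`, with `t = x_l + y_l`, followed by Fast2Sum on `(s_h, v)`. Fast2Sum is exact
as soon as `|v| ≤ |s_h|` (`fast2sum_exact`), and then the only error is `|RN(t) - t| ≤ u |t|`
(`IsRN.rel_err`). It remains to see that `|t| ≤ |s_h|` and `|t| ≤ |s_h + t| = |S|`; when
`|x_h| = |y_h|` one has `s_h = 0` and the claim is immediate.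

Otherwise let `0 < b < a` be the two absolute values, `α` and `β` the corresponding low words, so
that `t = α - β` up to sign, and let `f` be a floating-point number strictly between `b` and `a`.
As `a + α` is at least as close to `a` as to `f`, `α ≥ -(a - f)/2`; likewise `β ≤ (f - b)/2`. Hence
`t ≥ -(a - b)/2`, which yields `|t| ≤ |S|`. For the upper bound on `t`, let `2^e` be the ulp of `b`:
then `a - b ≥ 2 · 2^e`, while comparison with floating-point numbers at distance at most `2 · 2^e`
above `a` and `2^e` below `b` gives `t ≤ 2^e + 2^e/2` (`low_words_bound`).
-/

/-- The radix-2, precision-`p` floating-point numbers with unlimited exponent range. -/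
def Fp (p : ℕ) : Set ℝ := {x : ℝ | ∃ M e : ℤ, |M| ≤ 2 ^ p - 1 ∧ x = (M : ℝ) * (2 : ℝ) ^ e}

/-- Round toward `-∞`: the largest floating-point number `≤ x`. -/
noncomputable def RD (p : ℕ) (x : ℝ) : ℝ := sSup {f : ℝ | f ∈ Fp p ∧ f ≤ x}

/-- Round toward `+∞`: the smallest floating-point number `≥ x`. -/
noncomputable def RU (p : ℕ) (x : ℝ) : ℝ := sInf {f : ℝ | f ∈ Fp p ∧ x ≤ f}

/-- `y` is a faithful rounding of `x`. -/
def Faithful (p : ℕ) (x y : ℝ) : Prop := y = RD p x ∨ y = RU p x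

/-- `RN` is a round-to-nearest function for precision `p`. -/
def IsRN (p : ℕ) (RN : ℝ → ℝ) : Prop :=
  (∀ x : ℝ, RN x ∈ Fp p) ∧ ∀ x f : ℝ, f ∈ Fp p → |RN x - x| ≤ |f - x|

/-- `RN` is symmetric. -/
def SymRN (RN : ℝ → ℝ) : Prop := ∀ x : ℝ, RN (-x) = -RN x

/-- A nonzero `f ∈ F_p` is *even* if `f · 2^(-e_f)` is an even integer, where
`e_f = ⌊log₂ |f|⌋ - p + 1`; `0` is even. -/
def FpEven (p : ℕ) (f : ℝ) : Prop :=
  f = 0 ∨ ∃ m : ℤ, Even m ∧ f = (m : ℝ) * (2 : ℝ) ^ (Int.log 2 |f| - (p : ℤ) + 1)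

/-- `RN` breaks ties to even. -/
def TiesToEven (p : ℕ) (RN : ℝ → ℝ) : Prop :=
  ∀ x : ℝ, RD p x ≠ RU p x → |x - RD p x| = |RU p x - x| →
    (RN x = RD p x ∨ RN x = RU p x) ∧ FpEven p (RN x)

/-- `RN` breaks ties away from zero. -/
def TiesToAway (p : ℕ) (RN : ℝ → ℝ) : Prop :=
  ∀ x : ℝ, RD p x ≠ RU p x → |x - RD p x| = |RU p x - x| →
    (RN x = RD p x ∨ RN x = RU p x) ∧ |RN x| = max |RD p x| |RU p x|

/-- Sloppy double-word addition with rounding function `R`. -/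
noncomputable def sloppyAdd (R : ℝ → ℝ) (xh xl yh yl : ℝ) : ℝ × ℝ :=
  let sh := R (xh + yh)
  let a' := R (sh - yh)
  let b' := R (sh - a')
  let sl := R (R (xh - a') + R (yh - b'))
  let v := R (xl + yl)
  let w := R (sl + v)
  let zh := R (sh + w)
  let d := R (zh - sh)
  let zl := R (w - d)
  (zh, zl)

/-! ### Floating-point numbers -/

/-- The bound `2 ^ p` on the significand may be attained: `± 2 ^ p * 2 ^ e = ± 1 * 2 ^ (p + e)`. -/
lemma Fp_mem_of_abs_le {p : ℕ} (hp : 1 ≤ p) (K e : ℤ) (hK : |K| ≤ 2 ^ p) :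
    (K : ℝ) * (2 : ℝ) ^ e ∈ Fp p := by
  rcases hK.lt_or_eq with h | h
  · exact ⟨K, e, by omega, rfl⟩
  have h2 : (2 : ℤ) ^ 1 ≤ 2 ^ p := pow_le_pow_right₀ (by norm_num) hp
  rcases eq_or_eq_neg_of_abs_eq h with h' | h'
  · refine ⟨1, p + e, by simp; omega, ?_⟩
    rw [h', zpow_add₀ (by norm_num)]; push_cast; simp
  · refine ⟨-1, p + e, by simp; omega, ?_⟩
    rw [h', zpow_add₀ (by norm_num)]; push_cast; simp

lemma Fp_neg_mem {p : ℕ} {x : ℝ} (hx : x ∈ Fp p) : -x ∈ Fp p := by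
  obtain ⟨M, e, hM, rfl⟩ := hx
  exact ⟨-M, e, by rwa [abs_neg], by push_cast; ring⟩

lemma Fp_zero_mem (p : ℕ) : (0 : ℝ) ∈ Fp p :=
  ⟨0, 0, by simpa using one_le_pow₀ (by norm_num : (1 : ℤ) ≤ 2), by simp⟩

lemma Fp_half_mem {p : ℕ} {x : ℝ} (hx : x ∈ Fp p) : x / 2 ∈ Fp p := by
  obtain ⟨M, e, hM, rfl⟩ := hx
  exact ⟨M, e - 1, hM, by rw [zpow_sub_one₀ (by norm_num)]; ring⟩

lemma Fp_double_mem {p : ℕ} {x : ℝ} (hx : x ∈ Fp p) : 2 * x ∈ Fp p := by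
  obtain ⟨M, e, hM, rfl⟩ := hx
  exact ⟨M, e + 1, hM, by rw [zpow_add_one₀ (by norm_num)]; ring⟩

/-- A multiple of `2 ^ e` is a multiple of every smaller power of two. -/
lemma mul_zpow_of_le (M : ℤ) {e f : ℤ} (h : e ≤ f) :
    ∃ K : ℤ, (M : ℝ) * (2 : ℝ) ^ f = (K : ℝ) * (2 : ℝ) ^ e := by
  obtain ⟨n, rfl⟩ := Int.le.dest h
  refine ⟨M * 2 ^ n, ?_⟩
  rw [zpow_add₀ (by norm_num)]; push_cast; rw [zpow_natCast]; ring

/-- A multiple of `2 ^ e` that is dominated by `M * 2 ^ e` inherits its representability. -/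
lemma Fp_mem_of_dominated {p : ℕ} {M K e : ℤ} (hM : |M| ≤ 2 ^ p - 1)
    (h : |(K : ℝ) * (2 : ℝ) ^ e| ≤ |(M : ℝ) * (2 : ℝ) ^ e|) : (K : ℝ) * (2 : ℝ) ^ e ∈ Fp p := by
  have he : (0 : ℝ) < 2 ^ e := by positivity
  rw [abs_mul, abs_mul, abs_of_pos he] at h
  have h' := le_of_mul_le_mul_right h he
  exact ⟨K, e, le_trans (by exact_mod_cast h') hM, rfl⟩

/-- Sterbenz' lemma, in the form: a difference dominated by both operands is representable. -/
lemma Fp_sub_mem {p : ℕ} {a b : ℝ} (ha : a ∈ Fp p) (hb : b ∈ Fp p)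
    (h1 : |a - b| ≤ |a|) (h2 : |a - b| ≤ |b|) : a - b ∈ Fp p := by
  obtain ⟨M, e, hM, rfl⟩ := ha
  obtain ⟨N, f, hN, rfl⟩ := hb
  rcases le_total e f with h | h
  · obtain ⟨K, hK⟩ := mul_zpow_of_le N h
    rw [hK, ← sub_mul] at h1 ⊢
    rw [← Int.cast_sub] at h1 ⊢
    exact Fp_mem_of_dominated hM h1
  · obtain ⟨K, hK⟩ := mul_zpow_of_le M h
    rw [hK, ← sub_mul] at h2 ⊢
    rw [← Int.cast_sub] at h2 ⊢
    exact Fp_mem_of_dominated hN h2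

/-- If `M * 2 ^ k` has a `p`-bit significand and is at least `2 ^ (p - 1 + e)`, then it is a multiple
of `2 ^ e`. -/
lemma exponent_ge {p : ℕ} {M k e : ℤ} (hM : |M| ≤ 2 ^ p - 1)
    (h : (2 : ℝ) ^ ((p : ℤ) - 1 + e) ≤ (M : ℝ) * (2 : ℝ) ^ k) : e ≤ k := by
  by_contra! hlt
  have hM' : (M : ℝ) ≤ 2 ^ p - 1 := by exact_mod_cast (le_abs_self M).trans hM
  have hk : (0 : ℝ) < 2 ^ k := by positivity
  have h3 : (2 : ℝ) ^ ((p : ℤ) + k) ≤ (2 : ℝ) ^ ((p : ℤ) - 1 + e) :=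
    zpow_le_zpow_right₀ (by norm_num) (by omega)
  rw [zpow_add₀ (by norm_num), zpow_natCast] at h3
  nlinarith

/-- Positive floating-point numbers have a normalized representation. -/
lemma Fp_normalize {p : ℕ} {b : ℝ} (hb : b ∈ Fp p) (hpos : 0 < b) :
    ∃ N e : ℤ, 2 ^ p ≤ 2 * N ∧ N ≤ 2 ^ p - 1 ∧ b = (N : ℝ) * (2 : ℝ) ^ e := by
  obtain ⟨M, k, hM, hMk⟩ := hb
  have hlo := Int.zpow_log_le_self (b := 2) (by norm_num) hpos
  have hhi := Int.lt_zpow_succ_log_self (b := 2) (by norm_num) b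
  push_cast at hlo hhi
  set e := Int.log 2 b - ((p : ℤ) - 1) with he
  have hle : e ≤ k := by
    apply exponent_ge hM
    rw [← hMk, he, show (p : ℤ) - 1 + (Int.log 2 b - ((p : ℤ) - 1)) = Int.log 2 b by ring]
    exact hlo
  obtain ⟨N, hN⟩ := mul_zpow_of_le M hle
  have e0 : (0 : ℝ) < 2 ^ e := by positivity
  rw [hN] at hMk
  have h1 : Int.log 2 b = (p : ℤ) + e - 1 := by omega
  rw [h1, hMk] at hlo hhi
  rw [sub_add_cancel, zpow_add₀ (by norm_num), zpow_natCast] at hhi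
  rw [zpow_sub_one₀ (by norm_num), zpow_add₀ (by norm_num), zpow_natCast] at hlo
  refine ⟨N, e, ?_, ?_, hMk⟩
  · have : (2 : ℝ) ^ p ≤ 2 * N := by
      refine le_of_mul_le_mul_right ?_ e0
      linarith
    exact_mod_cast this
  · have : (N : ℝ) < 2 ^ p := lt_of_mul_lt_mul_right hhi e0.le
    have : N < 2 ^ p := by exact_mod_cast this
    omega

/-! ### Rounding to nearest -/

lemma IsRN.eq_self {p : ℕ} {RN : ℝ → ℝ} (h : IsRN p RN) {x : ℝ} (hx : x ∈ Fp p) : RN x = x := by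
  have := h.2 x x hx
  rw [sub_self, abs_zero] at this
  exact sub_eq_zero.mp (abs_nonpos_iff.mp this)

lemma IsRN.le_of_le {p : ℕ} {RN : ℝ → ℝ} (h : IsRN p RN) {x f : ℝ} (hf : f ∈ Fp p)
    (hx : x ≤ f) : RN x ≤ f := by
  have := h.2 x f hf
  rw [abs_of_nonneg (sub_nonneg.mpr hx)] at this
  linarith [le_abs_self (RN x - x)]

lemma IsRN.ge_of_ge {p : ℕ} {RN : ℝ → ℝ} (h : IsRN p RN) {x f : ℝ} (hf : f ∈ Fp p)
    (hx : f ≤ x) : f ≤ RN x := by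
  have := h.2 x f hf
  rw [abs_of_nonpos (sub_nonpos.mpr hx)] at this
  linarith [neg_abs_le (RN x - x)]

/-- Rounding is compatible with grids: a multiple of `2 ^ e` is rounded to a multiple of `2 ^ e`. -/
lemma IsRN.mul_zpow {p : ℕ} (hp : 1 ≤ p) {RN : ℝ → ℝ} (h : IsRN p RN) (K e : ℤ) :
    ∃ L : ℤ, RN ((K : ℝ) * (2 : ℝ) ^ e) = (L : ℝ) * (2 : ℝ) ^ e := by
  by_cases hK : |K| ≤ 2 ^ p
  · exact ⟨K, h.eq_self (Fp_mem_of_abs_le hp K e hK)⟩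
  obtain ⟨M, k, hM, hMk⟩ := h.1 ((K : ℝ) * (2 : ℝ) ^ e)
  have e0 : (0 : ℝ) < 2 ^ e := by positivity
  suffices hle : e ≤ k by
    obtain ⟨L, hL⟩ := mul_zpow_of_le M hle
    exact ⟨L, hMk.trans hL⟩
  have hlow : (2 : ℝ) ^ ((p : ℤ) - 1 + e) ≤ 2 ^ p * 2 ^ e := by
    rw [← zpow_natCast, ← zpow_add₀ (by norm_num)]
    exact zpow_le_zpow_right₀ (by norm_num) (by omega)
  have hF : ((2 ^ p : ℤ) : ℝ) * (2 : ℝ) ^ e ∈ Fp p := Fp_mem_of_abs_le hp _ e (by simp)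
  push_cast at hF
  rcases lt_abs.mp (not_le.mp hK) with h1 | h1
  · have h1' : (2 : ℝ) ^ p < K := by exact_mod_cast h1
    have := h.ge_of_ge hF (mul_le_mul_of_nonneg_right h1'.le e0.le)
    exact exponent_ge hM (hMk ▸ hlow.trans this)
  · have h1' : (2 : ℝ) ^ p < -K := by exact_mod_cast h1
    have := h.le_of_le (Fp_neg_mem hF) (x := (K : ℝ) * (2 : ℝ) ^ e) (by nlinarith)
    rw [hMk] at this
    refine exponent_ge (M := -M) (by rwa [abs_neg]) ?_
    push_cast
    linarith

/-- The rounding error of a floating-point addition is a floating-point number. -/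
lemma IsRN.add_err_mem {p : ℕ} (hp : 1 ≤ p) {RN : ℝ → ℝ} (h : IsRN p RN) {a b : ℝ}
    (ha : a ∈ Fp p) (hb : b ∈ Fp p) : a + b - RN (a + b) ∈ Fp p := by
  have key : ∀ a b : ℝ, b ∈ Fp p → ∀ M e K : ℤ, |M| ≤ 2 ^ p - 1 → a = (M : ℝ) * (2 : ℝ) ^ e →
      b = (K : ℝ) * (2 : ℝ) ^ e → a + b - RN (a + b) ∈ Fp p := by
    intro a b hb M e K hM ha hK
    -- the error is at most `|a|`, because `b` is a candidate for the rounded sum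
    have h1 : |a + b - RN (a + b)| ≤ |a| := by
      rw [abs_sub_comm]
      refine (h.2 (a + b) b hb).trans (le_of_eq ?_)
      rw [← abs_neg]; congr 1; ring
    have hab : a + b = ((M + K : ℤ) : ℝ) * (2 : ℝ) ^ e := by rw [ha, hK]; push_cast; ring
    obtain ⟨L, hL⟩ := h.mul_zpow hp (M + K) e
    have herr : a + b - RN (a + b) = ((M + K - L : ℤ) : ℝ) * (2 : ℝ) ^ e := by
      rw [hab, hL]; push_cast; ring
    rw [herr] at h1 ⊢
    rw [ha] at h1
    exact Fp_mem_of_dominated hM h1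
  obtain ⟨M, e, hM, hMe⟩ := id ha
  obtain ⟨N, f, hN, hNf⟩ := id hb
  rcases le_total e f with hef | hef
  · obtain ⟨K, hK⟩ := mul_zpow_of_le N hef
    exact key a b hb M e K hM hMe (hNf.trans hK)
  · obtain ⟨K, hK⟩ := mul_zpow_of_le M hef
    rw [add_comm]
    exact key b a ha N f K hN hNf (hMe.trans hK)

lemma IsRN.rel_err {p : ℕ} (hp : 1 ≤ p) {RN : ℝ → ℝ} (h : IsRN p RN) (t : ℝ) :
    |RN t - t| ≤ (2 : ℝ) ^ (-(p : ℤ)) * |t| := by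
  rcases eq_or_ne t 0 with rfl | ht
  · simp [h.eq_self (Fp_zero_mem p)]
  have hpos : 0 < |t| := abs_pos.mpr ht
  have hlo := Int.zpow_log_le_self (b := 2) (by norm_num) hpos
  have hhi := Int.lt_zpow_succ_log_self (b := 2) (by norm_num) |t|
  push_cast at hlo hhi
  set e := Int.log 2 |t| - ((p : ℤ) - 1) with he
  have h1 : Int.log 2 |t| = (p : ℤ) + e - 1 := by omega
  have e0 : (0 : ℝ) < 2 ^ e := by positivity
  rw [h1] at hlo hhi
  rw [sub_add_cancel, zpow_add₀ (by norm_num), zpow_natCast] at hhi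
  rw [zpow_sub_one₀ (by norm_num), zpow_add₀ (by norm_num), zpow_natCast] at hlo
  -- the nearest point of the grid `2 ^ e * ℤ`
  set n := round (t / 2 ^ e) with hn
  have hr : |t / 2 ^ e - n| ≤ 1 / 2 := abs_sub_round _
  have hq : |t / 2 ^ e| < 2 ^ p := by
    rw [abs_div, abs_of_pos e0, div_lt_iff₀ e0]; exact hhi
  have hn2 : |n| ≤ 2 ^ p := by
    have h3 : |(n : ℝ)| < 2 ^ p + 1 := by
      have := abs_sub_abs_le_abs_sub (n : ℝ) (t / 2 ^ e)
      rw [abs_sub_comm] at this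
      linarith
    have h4 : |n| < 2 ^ p + 1 := by exact_mod_cast h3
    omega
  refine (h.2 t _ (Fp_mem_of_abs_le hp n e hn2)).trans ?_
  have h5 : (n : ℝ) * 2 ^ e - t = -((t / 2 ^ e - n) * 2 ^ e) := by field_simp; ring
  rw [h5, abs_neg, abs_mul, abs_of_pos e0]
  have h6 : (2 : ℝ) ^ (-(p : ℤ)) * |t| ≥ 2 ^ (-(p : ℤ)) * (2 ^ p * 2 ^ e * 2⁻¹) :=
    mul_le_mul_of_nonneg_left hlo (by positivity)
  have h7 : (2 : ℝ) ^ (-(p : ℤ)) * (2 ^ p * 2 ^ e * 2⁻¹) = 2 ^ e / 2 := by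
    rw [zpow_neg, zpow_natCast]; field_simp
  nlinarith

/-! ### Fast2Sum -/

/-- In Fast2Sum with `|b| ≤ |a|`, the first subtraction is exact. -/
lemma fast2sum_sub_mem {p : ℕ} {RN : ℝ → ℝ} (h : IsRN p RN) {a b : ℝ}
    (ha : a ∈ Fp p) (hb : b ∈ Fp p) (hab : |b| ≤ |a|) : RN (a + b) - a ∈ Fp p := by
  rcases le_total 0 a with h0 | h0
  · rw [abs_of_nonneg h0] at hab
    obtain ⟨hb1, hb2⟩ := abs_le.mp hab
    rcases le_total (-a / 2) b with hc | hc
    · have l1 := h.ge_of_ge (Fp_half_mem ha) (x := a + b) (by linarith)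
      have l2 := h.le_of_le (Fp_double_mem ha) (x := a + b) (by linarith)
      have hs : 0 ≤ RN (a + b) := by linarith
      apply Fp_sub_mem (h.1 _) ha
      · rw [abs_of_nonneg hs, abs_le]; constructor <;> linarith
      · rw [abs_of_nonneg h0, abs_le]; constructor <;> linarith
    · have hF : a - -b ∈ Fp p := by
        apply Fp_sub_mem ha (Fp_neg_mem hb)
        · rw [abs_of_nonneg h0, abs_le]; constructor <;> linarith
        · rw [abs_of_nonneg (by linarith : 0 ≤ -b), abs_le]; constructor <;> linarith
      rw [sub_neg_eq_add] at hF
      rwa [h.eq_self hF, add_sub_cancel_left]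
  · rw [abs_of_nonpos h0] at hab
    obtain ⟨hb1, hb2⟩ := abs_le.mp hab
    rcases le_total b (-a / 2) with hc | hc
    · have l1 := h.le_of_le (Fp_half_mem ha) (x := a + b) (by linarith)
      have l2 := h.ge_of_ge (Fp_double_mem ha) (x := a + b) (by linarith)
      have hs : RN (a + b) ≤ 0 := by linarith
      apply Fp_sub_mem (h.1 _) ha
      · rw [abs_of_nonpos hs, abs_le]; constructor <;> linarith
      · rw [abs_of_nonpos h0, abs_le]; constructor <;> linarith
    · have hF : a - -b ∈ Fp p := by
        apply Fp_sub_mem ha (Fp_neg_mem hb)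
        · rw [abs_of_nonpos h0, abs_le]; constructor <;> linarith
        · rw [abs_of_nonpos (by linarith : -b ≤ 0), abs_le]; constructor <;> linarith
      rw [sub_neg_eq_add] at hF
      rwa [h.eq_self hF, add_sub_cancel_left]

lemma fast2sum_exact {p : ℕ} (hp : 1 ≤ p) {RN : ℝ → ℝ} (h : IsRN p RN) {a b : ℝ}
    (ha : a ∈ Fp p) (hb : b ∈ Fp p) (hab : |b| ≤ |a|) :
    RN (a + b) + RN (b - RN (RN (a + b) - a)) = a + b := by
  rw [h.eq_self (fast2sum_sub_mem h ha hb hab)]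
  have := h.add_err_mem hp ha hb
  rw [show b - (RN (a + b) - a) = a + b - RN (a + b) by ring, h.eq_self this]
  ring

/-! ### The low words -/

/-- No point of `Fp p` is closer to `a + α` than `a` is; for `a ∈ Fp p` this says that `a` is a nearest
floating-point number to `a + α`. -/
def NearestLow (p : ℕ) (a α : ℝ) : Prop := ∀ f ∈ Fp p, |α| ≤ |f - (a + α)|

lemma IsRN.nearestLow {p : ℕ} {RN : ℝ → ℝ} (h : IsRN p RN) {a α : ℝ} (ha : RN (a + α) = a) :
    NearestLow p a α := by
  intro f hf
  have := h.2 (a + α) f hf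
  rwa [ha, sub_add_cancel_left, abs_neg] at this

lemma NearestLow.neg {p : ℕ} {a α : ℝ} (h : NearestLow p a α) : NearestLow p (-a) (-α) := by
  intro f hf
  have := h (-f) (Fp_neg_mem hf)
  rw [abs_neg, ← abs_neg (f - _)]
  convert this using 2; ring

lemma NearestLow.le {p : ℕ} {a α f : ℝ} (h : NearestLow p a α) (hf : f ∈ Fp p) (haf : a < f) :
    α ≤ (f - a) / 2 := by
  by_contra! hlt
  have := h f hf
  rw [abs_of_pos (by linarith)] at this
  rcases le_abs.mp this with h' | h' <;> linarith

lemma NearestLow.ge {p : ℕ} {a α f : ℝ} (h : NearestLow p a α) (hf : f ∈ Fp p) (haf : f < a) :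
    -(a - f) / 2 ≤ α := by
  have := h.neg.le (Fp_neg_mem hf) (neg_lt_neg haf)
  linarith

/-- If a floating-point number separates `b` from `a`, the difference `t = α - β` of the low words
is dominated both by `a - b` and by the exact result `a - b + t`. -/
lemma low_words_bound {p : ℕ} (hp : 1 ≤ p) {a b α β f : ℝ} (ha : a ∈ Fp p) (hb : b ∈ Fp p)
    (hf : f ∈ Fp p) (hb0 : 0 < b) (hbf : b < f) (hfa : f < a) (hab : a < 2 * b)
    (hα : NearestLow p a α) (hβ : NearestLow p b β) :
    |α - β| ≤ |a - b| ∧ |α - β| ≤ |a - b + (α - β)| := by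
  have hα1 := hα.ge hf hfa
  have hβ1 := hβ.le hf hbf
  suffices hup : α - β ≤ a - b by
    constructor
    · rw [abs_of_pos (by linarith : 0 < a - b), abs_le]; constructor <;> linarith
    · rw [abs_of_nonneg (by linarith : 0 ≤ a - b + (α - β)), abs_le]; constructor <;> linarith
  obtain ⟨N, e, hN1, hN2, hbN⟩ := Fp_normalize hb hb0
  obtain ⟨M, k, hM, hMk⟩ := ha
  obtain ⟨L, l, hL, hLl⟩ := hf
  have e0 : (0 : ℝ) < 2 ^ e := by positivity
  have hblow : (2 : ℝ) ^ ((p : ℤ) - 1 + e) ≤ b := by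
    have hN1' : (2 : ℝ) ^ p ≤ 2 * N := by exact_mod_cast hN1
    rw [hbN, zpow_add₀ (by norm_num), zpow_sub_one₀ (by norm_num), zpow_natCast]
    exact mul_le_mul_of_nonneg_right (by linarith) e0.le
  have hke : e ≤ k := exponent_ge hM (by linarith)
  have hle : e ≤ l := exponent_ge hL (by linarith)
  obtain ⟨A, hA⟩ := mul_zpow_of_le M hke
  obtain ⟨F, hF⟩ := mul_zpow_of_le L hle
  rw [hA] at hMk
  rw [hF] at hLl
  -- on the grid `2 ^ e * ℤ`, the strict inequalities `b < f < a` leave a gap of two steps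
  have hgap : (N : ℝ) + 2 ≤ A := by
    have h1 : N < F := by
      rw [hbN, hLl] at hbf; exact_mod_cast lt_of_mul_lt_mul_right hbf e0.le
    have h2 : F < A := by
      rw [hLl, hMk] at hfa; exact_mod_cast lt_of_mul_lt_mul_right hfa e0.le
    have : N + 2 ≤ A := by omega
    exact_mod_cast this
  have hgap' : 2 * (2 : ℝ) ^ e ≤ a - b := by rw [hMk, hbN]; nlinarith
  have hp2 : (0 : ℤ) < 2 ^ p := by positivity
  have hN0 : 0 < N := by omega
  have hβ2 : -(2 : ℝ) ^ e / 2 ≤ β := by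
    have hF1 : ((N - 1 : ℤ) : ℝ) * (2 : ℝ) ^ e ∈ Fp p :=
      Fp_mem_of_abs_le hp _ _ (by rw [abs_of_nonneg (by omega)]; omega)
    have heq : ((N - 1 : ℤ) : ℝ) * (2 : ℝ) ^ e = b - 2 ^ e := by rw [hbN]; push_cast; ring
    rw [heq] at hF1
    have := hβ.ge hF1 (by linarith)
    linarith
  have hα2 : α ≤ 2 ^ e := by
    rcases hke.eq_or_lt with hk | hk
    · -- `a` lies in the binade of `b`, so that its successor is `a + 2 ^ e`
      subst hk
      have hAM : A = M := by exact_mod_cast (mul_right_cancel₀ e0.ne' hA).symm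
      subst hAM
      have hA0 : 0 ≤ A := by
        have : N + 2 ≤ A := by exact_mod_cast hgap
        omega
      rw [abs_of_nonneg hA0] at hM
      have hF1 : ((A + 1 : ℤ) : ℝ) * (2 : ℝ) ^ e ∈ Fp p :=
        Fp_mem_of_abs_le hp _ _ (by rw [abs_of_nonneg (by omega)]; omega)
      have heq : ((A + 1 : ℤ) : ℝ) * (2 : ℝ) ^ e = a + 2 ^ e := by rw [hMk]; push_cast; ring
      rw [heq] at hF1
      have := hα.le hF1 (by linarith)
      linarith
    · -- `a` is a multiple of `2 ^ (e + 1)` below `2 ^ (p + e + 1)`, so `a + 2 ^ (e + 1) ∈ Fp p`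
      obtain ⟨B, hB⟩ := mul_zpow_of_le M (Int.add_one_le_of_lt hk)
      have e1 : (2 : ℝ) ^ (e + 1) = 2 * 2 ^ e := by rw [zpow_add_one₀ (by norm_num)]; ring
      have haB : a = 2 * B * 2 ^ e := by rw [hMk, ← hA, hB, e1]; ring
      have hB1 : B < N := by
        have : 2 * (B : ℝ) * 2 ^ e < 2 * N * 2 ^ e := by rw [← haB]; linarith
        have := lt_of_mul_lt_mul_right this e0.le
        have h' : (B : ℝ) < N := by linarith
        exact_mod_cast h'
      have hB0 : 0 ≤ B := by
        have h0 : 0 < 2 * (B : ℝ) * 2 ^ e := by rw [← haB]; linarith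
        have := pos_of_mul_pos_left h0 e0.le
        have h' : (0 : ℝ) ≤ B := by linarith
        exact_mod_cast h'
      have hF1 : ((B + 1 : ℤ) : ℝ) * (2 : ℝ) ^ (e + 1) ∈ Fp p :=
        Fp_mem_of_abs_le hp _ _ (by rw [abs_of_nonneg (by omega)]; omega)
      have heq : ((B + 1 : ℤ) : ℝ) * (2 : ℝ) ^ (e + 1) = a + 2 * 2 ^ e := by
        rw [haB, e1]; push_cast; ring
      rw [heq] at hF1
      have := hα.le hF1 (by linarith)
      linarith
  linarith

/-- `low_words_bound` for two numbers of opposite signs, the first being the larger one in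
magnitude. -/
lemma low_words_bound_signed {p : ℕ} (hp : 1 ≤ p) {x y α β f : ℝ} (hx : x ∈ Fp p) (hy : y ∈ Fp p)
    (hf : f ∈ Fp p) (hsign : x * y < 0) (hyf : |y| < f) (hfx : f < |x|) (hxy : |x| < 2 * |y|)
    (hα : NearestLow p x α) (hβ : NearestLow p y β) :
    |α + β| ≤ |x + y| ∧ |α + β| ≤ |x + y + (α + β)| := by
  rcases mul_neg_iff.mp hsign with ⟨h1, h2⟩ | ⟨h1, h2⟩
  · rw [abs_of_pos h1] at hfx hxy
    rw [abs_of_neg h2] at hyf hxy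
    have := low_words_bound hp hx (Fp_neg_mem hy) hf (by linarith) hyf hfx hxy hα hβ.neg
    simpa only [sub_neg_eq_add] using this
  · rw [abs_of_neg h1] at hfx hxy
    rw [abs_of_pos h2] at hyf hxy
    have := low_words_bound hp (Fp_neg_mem hx) hy hf (by linarith) hyf hfx hxy hα.neg hβ
    rw [show -α - β = -(α + β) by ring, show -x - y = -(x + y) by ring, ← neg_add] at this
    simpa only [abs_neg] using this

theorem sloppy_relerr_le_u_of_not_consecutive
    (p : ℕ) (hp : 6 ≤ p) (u : ℝ) (hu : u = (2 : ℝ) ^ (-(p : ℤ)))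
    (RN : ℝ → ℝ) (hRN : IsRN p RN) (hsym : SymRN RN)
    (hties : TiesToEven p RN ∨ TiesToAway p RN)
    (xh xl yh yl : ℝ)
    (hxh : xh ∈ Fp p) (hxl : xl ∈ Fp p) (hyh : yh ∈ Fp p) (hyl : yl ∈ Fp p)
    (hnx : RN (xh + xl) = xh) (hny : RN (yh + yl) = yh)
    (hsign : xh * yh < 0)
    (hr : max |xh| |yh| / 2 < min |xh| |yh|)
    (hnotconsec : |xh| = |yh| ∨
      ∃ f ∈ Fp p, min |xh| |yh| < f ∧ f < max |xh| |yh|) :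
    |(sloppyAdd RN xh xl yh yl).1 + (sloppyAdd RN xh xl yh yl).2 -
        (xh + xl + yh + yl)| ≤ u * |xh + xl + yh + yl| := by
  have hp1 : 1 ≤ p := by omega
  have hmm := hr
  rw [lt_min_iff, div_lt_iff₀ (by norm_num), div_lt_iff₀ (by norm_num), max_lt_iff, max_lt_iff]
    at hmm
  obtain ⟨⟨-, hyx⟩, hxy, -⟩ := hmm
  have hsh : xh + yh ∈ Fp p := by
    have h1 : |xh - -yh| ≤ |xh| ∧ |xh - -yh| ≤ |-yh| := by
      rw [abs_neg, sub_neg_eq_add]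
      rcases mul_neg_iff.mp hsign with ⟨h1, h2⟩ | ⟨h1, h2⟩
      · rw [abs_of_pos h1, abs_of_neg h2] at *
        constructor <;> rw [abs_le] <;> constructor <;> linarith
      · rw [abs_of_neg h1, abs_of_pos h2] at *
        constructor <;> rw [abs_le] <;> constructor <;> linarith
    simpa using Fp_sub_mem hxh (Fp_neg_mem hyh) h1.1 h1.2
  have h0 : RN 0 = 0 := hRN.eq_self (Fp_zero_mem p)
  set t := xl + yl with ht
  have hS : xh + xl + yh + yl = xh + yh + t := by rw [ht]; ring
  -- all the operations before `v` are exact, and `s_l = 0`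
  have hz : (sloppyAdd RN xh xl yh yl).1 + (sloppyAdd RN xh xl yh yl).2 =
      RN (xh + yh + RN t) + RN (RN t - RN (RN (xh + yh + RN t) - (xh + yh))) := by
    simp only [sloppyAdd, hRN.eq_self hsh, add_sub_cancel_right, add_sub_cancel_left,
      hRN.eq_self hxh, hRN.eq_self hyh, sub_self, h0, add_zero, zero_add, hRN.eq_self (hRN.1 _),
      ← ht]
  rw [hz, hS, hu]
  have herr := hRN.rel_err hp1 t
  have hu0 : (0 : ℝ) ≤ 2 ^ (-(p : ℤ)) := by positivity
  rcases hnotconsec with heq | ⟨f, hf, hf1, hf2⟩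
  · have hsum : xh + yh = 0 := by
      rcases abs_eq_abs.mp heq with h | h
      · rw [h] at hsign; nlinarith [mul_self_nonneg yh]
      · rw [h]; ring
    rw [hsum]
    simpa [h0, hRN.eq_self (hRN.1 _)] using herr
  have hbounds : |t| ≤ |xh + yh| ∧ |t| ≤ |xh + yh + t| := by
    have hnx' := hRN.nearestLow hnx
    have hny' := hRN.nearestLow hny
    rcases le_total |xh| |yh| with h | h
    · rw [min_eq_left h] at hf1
      rw [max_eq_right h] at hf2
      rw [ht, add_comm xh yh, add_comm xl yl]
      exact low_words_bound_signed hp1 hyh hxh hf (by linarith) hf1 hf2 (by linarith) hny' hnx'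
    · rw [min_eq_right h] at hf1
      rw [max_eq_left h] at hf2
      exact low_words_bound_signed hp1 hxh hyh hf hsign hf1 hf2 (by linarith) hnx' hny'
  have hv : |RN t| ≤ |xh + yh| := by
    have habs : |xh + yh| ∈ Fp p := by
      rcases abs_choice (xh + yh) with h | h <;> rw [h]
      exacts [hsh, Fp_neg_mem hsh]
    obtain ⟨h1, h2⟩ := abs_le.mp hbounds.1
    exact abs_le.mpr ⟨hRN.ge_of_ge (Fp_neg_mem habs) h1, hRN.le_of_le habs h2⟩
  rw [fast2sum_exact hp1 hRN hsh (hRN.1 t) hv, add_sub_add_left_eq_sub]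
  exact herr.trans (mul_le_mul_of_nonneg_left hbounds.2 hu0)
end

section
/- Let p ≥ 6, u = 2^(−p), and let RN be a symmetric round-to-nearest function whose tie-breaking rule is ties-to-even or ties-to-away. Let x_h, x_l, y_h, y_l ∈ F_p with RN(x_h + x_l) = x_h, RN(y_h + y_l) = y_h, x_h·y_h < 0, and suppose |x_h| and |y_h| are two consecutive floating-point numbers, i.e. |x_h| ≠ |y_h| and no f ∈ F_p satisfies min(|x_h|, |y_h|) < f < max(|x_h|, |y_h|). Then S = x_h + x_l + y_h + y_l ≠ 0 and the output of sloppy double-word addition with rounding RN satisfies |z_h + z_l − S| < 2·|S|. -/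
/-! ### Floating-point numbers and rounding to nearest -/

/-- The bound on the significand may be relaxed to `|M| ≤ 2 ^ p`, since `2 ^ p` is a power of two. -/
lemma mem_Fp_of_le {p : ℕ} (hp : 1 ≤ p) (M e : ℤ) (hM : |M| ≤ 2 ^ p) :
    (M : ℝ) * (2 : ℝ) ^ e ∈ Fp p := by
  have h2 : (2 : ℤ) ≤ 2 ^ p := by
    calc (2 : ℤ) = 2 ^ 1 := by norm_num
      _ ≤ 2 ^ p := pow_le_pow_right₀ (by norm_num) hp
  by_cases h : |M| ≤ 2 ^ p - 1
  · exact ⟨M, e, h, rfl⟩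
  · have h' : |M| = 2 ^ p := by omega
    have hpow : (2 : ℝ) ^ (e + p) = 2 ^ p * 2 ^ e := by
      rw [zpow_add₀ (by norm_num), zpow_natCast, mul_comm]
    rcases abs_eq (by positivity) |>.1 h' with h1 | h1
    · refine ⟨1, e + p, by rw [abs_one]; omega, ?_⟩
      rw [h1, hpow]; push_cast; ring
    · refine ⟨-1, e + p, by rw [abs_neg, abs_one]; omega, ?_⟩
      rw [h1, hpow]; push_cast; ring

lemma zero_mem_Fp {p : ℕ} (hp : 1 ≤ p) : (0 : ℝ) ∈ Fp p := by
  simpa using mem_Fp_of_le hp 0 0 (by simp)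

/-- A floating-point number of magnitude at least `2 ^ (k + p - 1)` is a multiple of `2 ^ k`. -/
lemma Fp_multiple {p : ℕ} {f : ℝ} (hf : f ∈ Fp p) (k : ℤ)
    (h : (2 : ℝ) ^ (k + p - 1) ≤ |f|) : ∃ m : ℤ, f = (m : ℝ) * (2 : ℝ) ^ k := by
  obtain ⟨M, e, hM, rfl⟩ := hf
  rcases le_or_gt k e with hke | hke
  · obtain ⟨n, rfl⟩ := Int.le.dest hke
    refine ⟨M * 2 ^ n, ?_⟩
    rw [zpow_add₀ (by norm_num), zpow_natCast]; push_cast; ring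
  · exfalso
    have h1 : (2 : ℝ) ^ (e + p) ≤ 2 ^ (k + p - 1) := zpow_le_zpow_right₀ (by norm_num) (by omega)
    have h2 : (2 : ℝ) ^ (e + p) = 2 ^ p * 2 ^ e := by
      rw [zpow_add₀ (by norm_num), zpow_natCast, mul_comm]
    have he : (0 : ℝ) < 2 ^ e := by positivity
    rw [abs_mul, abs_of_pos he] at h
    have h3 : (2 : ℝ) ^ p ≤ |(M : ℝ)| := le_of_mul_le_mul_right (by linarith) he
    have h4 : (2 : ℤ) ^ p ≤ |M| := by exact_mod_cast h3
    omega

lemma RN_eq_self {p : ℕ} {RN : ℝ → ℝ} (hRN : IsRN p RN) {f : ℝ} (hf : f ∈ Fp p) : RN f = f := by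
  have h := hRN.2 f f hf
  rw [sub_self, abs_zero] at h
  linarith [abs_nonpos_iff.1 h]

/-- For `|x| ≤ 2 ^ k` the rounding error is at most `2 ^ (k - p - 1)`: compare with the nearest
multiple of `2 ^ (k - p)`, which is a floating-point number. -/
lemma RN_err {p : ℕ} (hp : 1 ≤ p) {RN : ℝ → ℝ} (hRN : IsRN p RN) (k : ℤ) (x : ℝ)
    (hx : |x| ≤ (2 : ℝ) ^ k) : |RN x - x| ≤ (2 : ℝ) ^ (k - p) / 2 := by
  have hh : (0 : ℝ) < 2 ^ (k - p) := by positivity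
  have hk : (2 : ℝ) ^ k = 2 ^ p * 2 ^ (k - p) := by
    rw [← zpow_natCast, ← zpow_add₀ (by norm_num)]; congr 1; ring
  set h : ℝ := 2 ^ (k - p) with hdef
  have hr := abs_le.1 (abs_sub_round (x / h))
  have hy : |x / h| ≤ 2 ^ p := by
    rw [abs_div, abs_of_pos hh, div_le_iff₀ hh]; linarith
  have hy' := abs_le.1 hy
  have hmem : (round (x / h) : ℝ) * h ∈ Fp p := by
    apply mem_Fp_of_le hp
    have a1 : ((round (x / h) : ℤ) : ℝ) < ((2 ^ p + 1 : ℤ) : ℝ) := by push_cast; linarith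
    have a2 : ((-(2 ^ p + 1) : ℤ) : ℝ) < ((round (x / h) : ℤ) : ℝ) := by push_cast; linarith
    rw [Int.cast_lt] at a1 a2
    rw [abs_le]; constructor <;> omega
  refine (hRN.2 x _ hmem).trans ?_
  have hx' : x = x / h * h := by field_simp
  have : (round (x / h) : ℝ) * h - x = -((x / h - round (x / h)) * h) := by
    rw [sub_mul, ← hx']; ring
  rw [this, abs_neg, abs_mul, abs_of_pos hh]
  nlinarith [abs_sub_round (x / h)]

/-- Two consecutive positive floating-point numbers are `M * 2 ^ k` and `(M + 1) * 2 ^ k` for a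
normalized significand `M`. -/
lemma consecutive_form {p : ℕ} (hp : 1 ≤ p) {A B : ℝ} (hA : A ∈ Fp p) (hB : B ∈ Fp p)
    (hB0 : 0 < B) (hAB : B < A) (hc : ¬∃ f ∈ Fp p, B < f ∧ f < A) :
    ∃ M k : ℤ, 2 ^ (p - 1) ≤ M ∧ M ≤ 2 ^ p - 1 ∧ B = (M : ℝ) * (2 : ℝ) ^ k ∧
      A = (M + 1 : ℝ) * (2 : ℝ) ^ k := by
  set k : ℤ := Int.log 2 B - p + 1 with hk
  have hlo : (2 : ℝ) ^ (k + p - 1) ≤ B := by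
    have := Int.zpow_log_le_self (b := 2) (by norm_num) hB0
    rw [show k + p - 1 = Int.log 2 B by omega]; exact_mod_cast this
  have hhi : B < (2 : ℝ) ^ (k + p) := by
    have := Int.lt_zpow_succ_log_self (b := 2) (by norm_num) B
    rw [show k + p = Int.log 2 B + 1 by omega]; exact_mod_cast this
  obtain ⟨M, hM⟩ := Fp_multiple hB k (by rwa [abs_of_pos hB0])
  obtain ⟨N, hN⟩ := Fp_multiple hA k (by rw [abs_of_pos (hB0.trans hAB)]; linarith)
  have hg : (0 : ℝ) < 2 ^ k := by positivity
  have e1 : (2 : ℝ) ^ (k + p - 1) = 2 ^ (p - 1) * 2 ^ k := by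
    rw [← zpow_natCast, ← zpow_add₀ (by norm_num)]; congr 1; push_cast [hp]; ring
  have e2 : (2 : ℝ) ^ (k + p) = 2 ^ p * 2 ^ k := by
    rw [← zpow_natCast, ← zpow_add₀ (by norm_num)]; congr 1; ring
  rw [e1, hM] at hlo
  rw [e2, hM] at hhi
  have b1 : (2 : ℤ) ^ (p - 1) ≤ M := by exact_mod_cast le_of_mul_le_mul_right hlo hg
  have b2 : M < (2 : ℤ) ^ p := by exact_mod_cast lt_of_mul_lt_mul_right hhi hg.le
  have b3 : M < N := by
    rw [hM, hN] at hAB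
    exact_mod_cast lt_of_mul_lt_mul_right hAB hg.le
  have b0 : (0 : ℤ) < 2 ^ (p - 1) := by positivity
  refine ⟨M, k, b1, by omega, hM, le_antisymm ?_ ?_⟩
  · by_contra hlt
    push Not at hlt
    refine hc ⟨((M + 1 : ℤ) : ℝ) * 2 ^ k, mem_Fp_of_le hp _ _ ?_, ?_, ?_⟩
    · rw [abs_of_pos (by omega)]; omega
    · rw [hM]; push_cast; nlinarith
    · push_cast; exact hlt
  · rw [hN]
    have : (M : ℝ) + 1 ≤ N := by exact_mod_cast b3
    exact mul_le_mul_of_nonneg_right this hg.le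

/-! ### Reduction to Fast2Sum -/

/-- The sum of the two words returned by Fast2Sum on `(s, v)`. -/
noncomputable def fastSum (RN : ℝ → ℝ) (s v : ℝ) : ℝ :=
  RN (s + v) + RN (v - RN (RN (s + v) - s))

lemma fastSum_neg {RN : ℝ → ℝ} (hsym : SymRN RN) (s v : ℝ) :
    fastSum RN (-s) (-v) = -fastSum RN s v := by
  unfold fastSum
  have e1 : -s + -v = -(s + v) := by ring
  rw [e1, hsym]
  have e2 : -RN (s + v) - -s = -(RN (s + v) - s) := by ring
  rw [e2, hsym]
  have e3 : -v - -RN (RN (s + v) - s) = -(v - RN (RN (s + v) - s)) := by ring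
  rw [e3, hsym]; ring

/-- If `x_h + y_h` is a floating-point number, then the first error-free transformation is trivial. -/
lemma sloppyAdd_eq_fastSum {p : ℕ} (hp : 1 ≤ p) {RN : ℝ → ℝ} (hRN : IsRN p RN)
    {xh xl yh yl : ℝ} (hxh : xh ∈ Fp p) (hyh : yh ∈ Fp p) (hs : xh + yh ∈ Fp p) :
    (sloppyAdd RN xh xl yh yl).1 + (sloppyAdd RN xh xl yh yl).2 =
      fastSum RN (xh + yh) (RN (xl + yl)) := by
  have h0 : RN 0 = 0 := RN_eq_self hRN (zero_mem_Fp hp)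
  simp only [sloppyAdd, fastSum]
  rw [RN_eq_self hRN hs, add_sub_cancel_right, RN_eq_self hRN hxh, add_sub_cancel_left,
    RN_eq_self hRN hyh, sub_self, sub_self, h0, add_zero, h0, zero_add,
    RN_eq_self hRN (hRN.1 (xl + yl))]

/-! ### The error bound -/

/-- The error bound for the double-words `A + a` and `-(B + b)`, where `B < A` are consecutive
positive floating-point numbers. -/
lemma fastSum_consecutive {p : ℕ} (hp : 6 ≤ p) {RN : ℝ → ℝ} (hRN : IsRN p RN)
    {A B a b : ℝ} (hA : A ∈ Fp p) (hB : B ∈ Fp p) (ha : a ∈ Fp p) (hb : b ∈ Fp p)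
    (hB0 : 0 < B) (hAB : B < A) (hc : ¬∃ f ∈ Fp p, B < f ∧ f < A)
    (hnA : RN (A + a) = A) (hnB : RN (B + b) = B) :
    A - B ∈ Fp p ∧
      |fastSum RN (A - B) (RN (a - b)) - (A - B + (a - b))| < 2 * |A - B + (a - b)| := by
  have hp1 : 1 ≤ p := by omega
  obtain ⟨M, k, hM1, hM2, hBM, hAM⟩ := consecutive_form hp1 hA hB hB0 hAB hc
  have hpow : (2 : ℤ) ^ p = 2 * 2 ^ (p - 1) := by
    rw [← pow_succ']; congr 1; omega
  have hpow5 : (32 : ℤ) ≤ 2 ^ (p - 1) := by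
    calc (32 : ℤ) = 2 ^ 5 := by norm_num
      _ ≤ 2 ^ (p - 1) := pow_le_pow_right₀ (by norm_num) (by omega)
  have hg : (0 : ℝ) < 2 ^ k := by positivity
  have hsub : A - B = 2 ^ k := by rw [hAM, hBM]; ring
  -- Bounds on the low words, from the neighbours of `A` and of `B`.
  have ha1 : -(2 ^ k / 2) ≤ a := by
    have h := hRN.2 (A + a) B hB
    rw [hnA, show A - (A + a) = -a by ring, show B - (A + a) = -(A - B + a) by ring,
      abs_neg, abs_neg, hsub] at h
    by_contra hlt
    push Not at hlt
    rw [abs_of_neg (by linarith)] at h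
    rcases abs_cases (2 ^ k + a) with h' | h' <;> linarith
  have hb2 : b ≤ 2 ^ k / 2 := by
    have h := hRN.2 (B + b) A hA
    rw [hnB, show B - (B + b) = -b by ring, show A - (B + b) = (A - B - b) by ring,
      abs_neg, hsub] at h
    by_contra hlt
    push Not at hlt
    rw [abs_of_pos (by linarith)] at h
    rcases abs_cases (2 ^ k - b) with h' | h' <;> linarith
  have hb1 : -(2 ^ k / 2) ≤ b := by
    have hmem : B - 2 ^ k ∈ Fp p := by
      have := mem_Fp_of_le hp1 (M - 1) k (by rw [abs_of_pos (by omega)]; omega)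
      convert this using 1
      rw [hBM]; push_cast; ring
    have h := hRN.2 (B + b) _ hmem
    rw [hnB, show B - (B + b) = -b by ring, show B - 2 ^ k - (B + b) = -(2 ^ k + b) by ring,
      abs_neg, abs_neg] at h
    by_contra hlt
    push Not at hlt
    rw [abs_of_neg (by linarith)] at h
    rcases abs_cases (2 ^ k + b) with h' | h' <;> linarith
  have ha2 : a ≤ 2 ^ k := by
    -- The spacing doubles above `A` when `A` is a power of two; `A + 2 * 2 ^ k` or `A + 2 ^ k`
    -- is the successor of `A`.
    have hmem : ∃ f ∈ Fp p, A < f ∧ f ≤ A + 2 * 2 ^ k := by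
      by_cases hM3 : M + 2 ≤ 2 ^ p
      · refine ⟨((M + 2 : ℤ) : ℝ) * 2 ^ k, mem_Fp_of_le hp1 _ k ?_, ?_, ?_⟩
        · rw [abs_of_pos (by omega)]; omega
        · rw [hAM]; push_cast; linarith
        · rw [hAM]; push_cast; linarith
      · have hM4 : M = 2 * 2 ^ (p - 1) - 1 := by omega
        refine ⟨((2 ^ (p - 1) + 1 : ℤ) : ℝ) * 2 ^ (k + 1), mem_Fp_of_le hp1 _ _ ?_, ?_, ?_⟩
        · rw [abs_of_pos (by omega)]; omega
        · rw [hAM, hM4, zpow_add_one₀ (by norm_num)]; push_cast; linarith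
        · rw [hAM, hM4, zpow_add_one₀ (by norm_num)]; push_cast; linarith
    obtain ⟨f, hf, hf1, hf2⟩ := hmem
    have h := hRN.2 (A + a) f hf
    rw [hnA, show A - (A + a) = -a by ring, abs_neg] at h
    by_contra hlt
    push Not at hlt
    rw [abs_of_pos (by linarith)] at h
    rcases abs_cases (f - (A + a)) with h' | h' <;> linarith
  have hne : a - b ≠ -(2 ^ k) := by
    intro h
    have : A + a = B + b := by linarith
    rw [this, hnB] at hnA
    exact hAB.ne hnA
  have hgF : ((2 : ℝ) ^ k) ∈ Fp p := by
    simpa using mem_Fp_of_le hp1 1 k (by rw [abs_one]; omega)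
  rw [hsub]
  refine ⟨hgF, ?_⟩
  have hh : (0 : ℝ) < 2 ^ (k - p) := by positivity
  have hgh : (2 : ℝ) ^ k = 2 ^ p * 2 ^ (k - p) := by
    rw [← zpow_natCast, ← zpow_add₀ (by norm_num)]; congr 1; ring
  have h64 : 64 * (2 : ℝ) ^ (k - p) ≤ 2 ^ k := by
    rw [hgh]
    refine mul_le_mul_of_nonneg_right ?_ hh.le
    calc (64 : ℝ) = 2 ^ 6 := by norm_num
      _ ≤ 2 ^ p := pow_le_pow_right₀ (by norm_num) hp
  have err0 := RN_err hp1 hRN k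
  have err1 := RN_err hp1 hRN (k + 1)
  have err2 := RN_err hp1 hRN (k + 2)
  rw [show k + 1 - (p : ℤ) = (k - p) + 1 by ring, zpow_add_one₀ (by norm_num),
    zpow_add_one₀ (by norm_num)] at err1
  rw [show k + 2 - (p : ℤ) = (k - p) + 2 by ring, zpow_add₀ (by norm_num),
    zpow_add₀ (by norm_num)] at err2
  have hgpos : (2 : ℝ) ^ (k - 1) = 2 ^ k / 2 := zpow_sub_one₀ (by norm_num) k
  have hlow : (2 : ℝ) ^ (k - 2) = 2 ^ k / 4 := by
    rw [zpow_sub₀ (by norm_num)]; norm_num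
  have hh2 : (2 : ℝ) ^ (k - p - 1) = 2 ^ (k - p) / 2 := zpow_sub_one₀ (by norm_num) _
  set t := a - b with ht
  set g : ℝ := 2 ^ k with hgdef
  set h : ℝ := 2 ^ (k - p) with hhdef
  rcases le_or_gt t (-(g / 2)) with hcase | hcase
  · have htg : -g < t := lt_of_le_of_ne (by linarith) (Ne.symm hne)
    have hv : |RN t - t| ≤ h / 2 := err0 t (by rw [abs_le]; constructor <;> linarith)
    have hv1 : -g ≤ RN t := by
      have hm : -g ∈ Fp p := by
        simpa using mem_Fp_of_le hp1 (-1) k (by rw [abs_neg, abs_one]; omega)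
      have := hRN.2 t _ hm
      rw [abs_of_nonpos (show -g - t ≤ 0 by linarith)] at this
      linarith [(abs_le.1 this).1]
    have hv2 : RN t ≤ -(g / 2) := by
      have hm : -(g / 2) ∈ Fp p := by
        rw [← hgpos]
        simpa using mem_Fp_of_le hp1 (-1) (k - 1) (by rw [abs_neg, abs_one]; omega)
      have := hRN.2 t _ hm
      rw [abs_of_nonneg (show 0 ≤ -(g / 2) - t by linarith)] at this
      linarith [(abs_le.1 this).2]
    have hmem : g + RN t ∈ Fp p := by
      obtain ⟨m, hm⟩ := Fp_multiple (hRN.1 t) (k - p) (by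
        rw [show k - (p : ℤ) + p - 1 = k - 1 by ring, hgpos,
          abs_of_nonpos (by linarith)]; linarith)
      have hsum : g + RN t = ((2 ^ p + m : ℤ) : ℝ) * h := by
        rw [hm, hgh]; push_cast; ring
      have c1 : (0 : ℝ) ≤ ((2 ^ p + m : ℤ) : ℝ) := by
        by_contra hneg
        push Not at hneg
        nlinarith
      have c2 : ((2 ^ p + m : ℤ) : ℝ) ≤ ((2 ^ p : ℤ) : ℝ) := by
        refine le_of_mul_le_mul_right ?_ hh
        rw [← hsum]; push_cast; rw [← hgh]; linarith
      rw [hsum]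
      refine mem_Fp_of_le hp1 _ _ ?_
      rw [abs_of_nonneg (by exact_mod_cast c1)]
      exact_mod_cast c2
    have hfast : fastSum RN g (RN t) = g + RN t := by
      unfold fastSum
      rw [RN_eq_self hRN hmem, add_sub_cancel_left, RN_eq_self hRN (hRN.1 t), sub_self,
        RN_eq_self hRN (zero_mem_Fp hp1), add_zero]
    rw [hfast, show g + RN t - (g + t) = RN t - t by ring, abs_of_pos (show 0 < g + t by linarith)]
    suffices h / 2 ≤ g + t by linarith
    by_cases hsmall : a ≤ -(g / 4) ∧ g / 4 ≤ b
    · obtain ⟨hs1, hs2⟩ := hsmall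
      obtain ⟨m, hm⟩ := Fp_multiple ha (k - p - 1) (by
        rw [show k - (p : ℤ) - 1 + p - 1 = k - 2 by ring, hlow,
          abs_of_nonpos (by linarith)]; linarith)
      obtain ⟨n, hn⟩ := Fp_multiple hb (k - p - 1) (by
        rw [show k - (p : ℤ) - 1 + p - 1 = k - 2 by ring, hlow,
          abs_of_nonneg (by linarith)]; linarith)
      rw [hh2] at hm hn
      have hsum : g + t = ((2 * 2 ^ p + m - n : ℤ) : ℝ) * (h / 2) := by
        rw [ht, hm, hn, hgh]; push_cast; ring
      have c1 : (0 : ℝ) < ((2 * 2 ^ p + m - n : ℤ) : ℝ) := by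
        by_contra hneg
        push Not at hneg
        nlinarith
      have c2 : (1 : ℝ) ≤ ((2 * 2 ^ p + m - n : ℤ) : ℝ) := by
        have : (0 : ℤ) < 2 * 2 ^ p + m - n := by exact_mod_cast c1
        exact_mod_cast this
      rw [hsum]
      nlinarith
    · have : g / 4 ≤ g + t := by
        by_contra hlt
        push Not at hlt
        exact hsmall ⟨by linarith, by linarith⟩
      linarith
  · have hv := abs_le.1 (err1 t (by rw [abs_le]; constructor <;> linarith))
    have hz := abs_le.1 (err2 (g + RN t) (by rw [abs_le]; constructor <;> linarith))
    have hd := abs_le.1 (err2 (RN (g + RN t) - g) (by rw [abs_le]; constructor <;> linarith))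
    have hl := abs_le.1 (err0 (RN t - RN (RN (g + RN t) - g))
      (by rw [abs_le]; constructor <;> linarith))
    rw [abs_of_pos (show 0 < g + t by linarith), abs_lt]
    unfold fastSum
    constructor <;> linarith

theorem sloppy_relerr_lt_two_of_consecutive
    (p : ℕ) (hp : 6 ≤ p) (u : ℝ) (hu : u = (2 : ℝ) ^ (-(p : ℤ)))
    (RN : ℝ → ℝ) (hRN : IsRN p RN) (hsym : SymRN RN)
    (hties : TiesToEven p RN ∨ TiesToAway p RN)
    (xh xl yh yl : ℝ)
    (hxh : xh ∈ Fp p) (hxl : xl ∈ Fp p) (hyh : yh ∈ Fp p) (hyl : yl ∈ Fp p)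
    (hnx : RN (xh + xl) = xh) (hny : RN (yh + yl) = yh)
    (hsign : xh * yh < 0)
    (hconsec : |xh| ≠ |yh| ∧
      ¬∃ f ∈ Fp p, min |xh| |yh| < f ∧ f < max |xh| |yh|) :
    xh + xl + yh + yl ≠ 0 ∧
      |(sloppyAdd RN xh xl yh yl).1 + (sloppyAdd RN xh xl yh yl).2 -
          (xh + xl + yh + yl)| < 2 * |xh + xl + yh + yl| := by
  have hp1 : 1 ≤ p := by omega
  obtain ⟨hne, hc⟩ := hconsec
  have negF : ∀ {f : ℝ}, f ∈ Fp p → -f ∈ Fp p := by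
    rintro f ⟨M, e, hM, rfl⟩
    exact ⟨-M, e, by rwa [abs_neg], by push_cast; ring⟩
  have negN : ∀ {a b : ℝ}, RN (a + b) = a → RN (-a + -b) = -a := by
    intro a b h
    rw [← neg_add, hsym, h]
  -- `S ≠ 0` is implied by the strict error bound.
  suffices hmain : xh + yh ∈ Fp p ∧
      |fastSum RN (xh + yh) (RN (xl + yl)) - (xh + yh + (xl + yl))| <
        2 * |xh + yh + (xl + yl)| by
    obtain ⟨hs, hlt⟩ := hmain
    rw [sloppyAdd_eq_fastSum hp1 hRN hxh hyh hs,
      show xh + xl + yh + yl = xh + yh + (xl + yl) by ring]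
    refine ⟨fun h0 => ?_, hlt⟩
    rw [h0, abs_zero, mul_zero] at hlt
    exact absurd (abs_nonneg _) (not_le.2 hlt)
  -- Negating both double-words preserves the claim.
  have flip : ∀ s t : ℝ, (-s ∈ Fp p ∧ |fastSum RN (-s) (RN (-t)) - (-s + -t)| < 2 * |-s + -t|) →
      s ∈ Fp p ∧ |fastSum RN s (RN t) - (s + t)| < 2 * |s + t| := by
    rintro s t ⟨h1, h2⟩
    refine ⟨by simpa using negF h1, ?_⟩
    rwa [hsym, fastSum_neg hsym, ← neg_add, abs_neg, neg_sub_neg, abs_sub_comm] at h2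
  rcases mul_neg_iff.1 hsign with ⟨hx, hy⟩ | ⟨hx, hy⟩
  · rw [abs_of_pos hx, abs_of_neg hy] at hne hc
    rcases lt_or_gt_of_ne hne with hlt | hlt
    · rw [min_eq_left hlt.le, max_eq_right hlt.le] at hc
      have := fastSum_consecutive hp hRN (negF hyh) hxh (negF hyl) hxl hx hlt hc (negN hny) hnx
      apply flip
      rwa [show -yh - xh = -(xh + yh) by ring, show -yl - xl = -(xl + yl) by ring] at this
    · rw [min_eq_right hlt.le, max_eq_left hlt.le] at hc
      have := fastSum_consecutive hp hRN hxh (negF hyh) hxl (negF hyl) (by linarith) hlt hc hnx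
        (negN hny)
      rwa [sub_neg_eq_add, sub_neg_eq_add] at this
  · rw [abs_of_neg hx, abs_of_pos hy] at hne hc
    rcases lt_or_gt_of_ne hne with hlt | hlt
    · rw [min_eq_left hlt.le, max_eq_right hlt.le] at hc
      have := fastSum_consecutive hp hRN hyh (negF hxh) hyl (negF hxl) (by linarith) hlt hc hny
        (negN hnx)
      rwa [sub_neg_eq_add, sub_neg_eq_add, add_comm yh, add_comm yl] at this
    · rw [min_eq_right hlt.le, max_eq_left hlt.le] at hc
      have := fastSum_consecutive hp hRN (negF hxh) hyh (negF hxl) hyl hy hlt hc (negN hnx) hny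
      apply flip
      rwa [show -xh - yh = -(xh + yh) by ring, show -xl - yl = -(xl + yl) by ring] at this
end
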